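/- Let X be uniformly distributed over a set A ⊆ {0,1}^n with |A| ≥ 2^{n-c} for some c ≥ 1, and let M be uniformly distributed over all α-matchings, for α ∈ (0, 1/4]. There exists a universal constant γ > 0 such that for all ε > 0: if c ≤ γε√(n/α), then E_M[ ∑_z |p_M(z) - 2^{-αn}| ] ≤ ε, where p_M(z) = |{x ∈ A : Mx = z}| / |A|. -/

import Mathlib

open Finset

open scoped Classical

def IsMatchingMatrix {m n : ℕ} (M : Matrix (Fin m) (Fin n) (ZMod 2)) : Prop :=
  (∀ ℓ, (Finset.univ.filter fun i => M ℓ i ≠ 0).card = 2) ∧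
  (∀ i, (Finset.univ.filter fun ℓ => M ℓ i ≠ 0).card ≤ 1)
noncomputable section

/-- The nontrivial real character of `ZMod 2`. -/
def parity (a : ZMod 2) : ℝ := if a = 0 then 1 else -1

lemma parity_zero : parity 0 = 1 := by simp [parity]

lemma parity_one : parity 1 = -1 := by simp [parity]

lemma eq_zero_or_one (a : ZMod 2) : a = 0 ∨ a = 1 := by
  revert a
  decide

lemma parity_add (a b : ZMod 2) : parity (a + b) = parity a * parity b := by
  have h : (1 : ZMod 2) + 1 = 0 := by decide
  rcases eq_zero_or_one a with rfl | rfl <;> rcases eq_zero_or_one b with rfl | rfl <;>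
    simp [parity, h]

/-- The Hamming weight. -/
def weight {n : ℕ} (v : Fin n → ZMod 2) : ℕ := (univ.filter fun i => v i ≠ 0).card

lemma sum_zmod_two (f : ZMod 2 → ℝ) : ∑ b, f b = f 0 + f 1 := Fin.sum_univ_two f

lemma sum_cons {n : ℕ} (f : (Fin (n + 1) → ZMod 2) → ℝ) :
    ∑ v, f v = ∑ v : Fin n → ZMod 2, (f (Fin.cons 0 v) + f (Fin.cons 1 v)) := by
  rw [← (Fin.consEquiv fun _ : Fin (n + 1) => ZMod 2).sum_comp, Fintype.sum_prod_type,
    sum_zmod_two, ← sum_add_distrib]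
  rfl

lemma dotProduct_cons {n : ℕ} (a b : ZMod 2) (v x : Fin n → ZMod 2) :
    (Fin.cons a v : Fin (n + 1) → ZMod 2) ⬝ᵥ Fin.cons b x = a * b + v ⬝ᵥ x := by
  simp [dotProduct, Fin.sum_univ_succ]

lemma weight_cons_zero {n : ℕ} (v : Fin n → ZMod 2) :
    weight (Fin.cons 0 v : Fin (n + 1) → ZMod 2) = weight v := by
  simp [weight, Fin.card_filter_univ_succ]

lemma weight_cons_one {n : ℕ} (v : Fin n → ZMod 2) :
    weight (Fin.cons 1 v : Fin (n + 1) → ZMod 2) = weight v + 1 := by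
  simp [weight, Fin.card_filter_univ_succ, add_comm]

lemma sum_even_terms (f : ℕ → ℝ) (r : ℕ) :
    ∑ i ∈ range (2 * r + 1), f i * (1 + (-1) ^ i) = 2 * ∑ j ∈ range (r + 1), f (2 * j) := by
  induction r with
  | zero => simp; ring
  | succ r ih =>
    rw [show 2 * (r + 1) + 1 = 2 * r + 1 + 1 + 1 by ring, sum_range_succ, sum_range_succ, ih,
      sum_range_succ _ (r + 1)]
    rw [show 2 * (r + 1) = 2 * r + 1 + 1 by ring]
    simp [pow_succ, pow_mul]
    ring

lemma choose_two_mul_le {r : ℕ} (hr : 1 ≤ r) (j : ℕ) :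
    ((2 * r).choose (2 * j) : ℝ) ≤ (2 * r - 1) ^ j * r.choose j := by
  induction j with
  | zero => simp
  | succ j ih =>
    have hr' : (1 : ℝ) ≤ r := by exact_mod_cast hr
    rcases Nat.lt_or_ge j r with h | h
    · have h1 := Nat.choose_succ_right_eq (2 * r) (2 * j)
      have h2 := Nat.choose_succ_right_eq (2 * r) (2 * j + 1)
      have h3 := Nat.choose_succ_right_eq r j
      have e1 : (((2 * r - 2 * j : ℕ)) : ℝ) = 2 * (r - j) := by
        rw [Nat.cast_sub (by omega)]; push_cast; ring
      have e2 : (((2 * r - (2 * j + 1) : ℕ)) : ℝ) = 2 * (r - j) - 1 := by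
        rw [Nat.cast_sub (by omega)]; push_cast; ring
      have e3 : (((r - j : ℕ)) : ℝ) = r - j := Nat.cast_sub h.le
      have g1 : ((2 * r).choose (2 * j + 1) : ℝ) * (2 * j + 1) =
          (2 * r).choose (2 * j) * (2 * (r - j)) := by
        rw [← e1]; exact_mod_cast h1
      have g2 : ((2 * r).choose (2 * (j + 1)) : ℝ) * (2 * j + 2) =
          (2 * r).choose (2 * j + 1) * (2 * (r - j) - 1) := by
        rw [← e2]; exact_mod_cast h2
      have g3 : (r.choose (j + 1) : ℝ) * (j + 1) = r.choose j * (r - j) := by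
        rw [← e3]; exact_mod_cast h3
      have hj : (j : ℝ) + 1 ≤ r := by exact_mod_cast h
      have hj0 : (0 : ℝ) ≤ j := j.cast_nonneg
      have key : ((2 * r).choose (2 * (j + 1)) : ℝ) * ((j + 1) * (2 * j + 1)) =
          (2 * r).choose (2 * j) * ((r - j) * (2 * (r - j) - 1)) := by
        linear_combination (1 / 2) * (2 * j + 1) * g2 + (1 / 2) * (2 * (r - j) - 1) * g1
      have hpos : (0 : ℝ) < (j + 1) * (2 * j + 1) := by positivity
      refine le_of_mul_le_mul_right ?_ hpos
      rw [key]
      have hb : (2 * ((r : ℝ) - j) - 1) ≤ (2 * r - 1) * (2 * j + 1) := by nlinarith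
      calc ((2 * r).choose (2 * j) : ℝ) * ((r - j) * (2 * (r - j) - 1))
          ≤ ((2 * r - 1) ^ j * r.choose j) * ((r - j) * ((2 * r - 1) * (2 * j + 1))) := by
            have : (0 : ℝ) ≤ r - j := by linarith
            have : (0 : ℝ) ≤ 2 * (r - j) - 1 := by linarith
            have : (0 : ℝ) ≤ 2 * r - 1 := by linarith
            gcongr
        _ = _ := by linear_combination (-(2 * (r : ℝ) - 1) ^ (j + 1) * (2 * j + 1)) * g3
    · rw [Nat.choose_eq_zero_of_lt (by omega), Nat.choose_eq_zero_of_lt (by omega)]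
      simp

/-- The two-point hypercontractive inequality for even exponents. -/
lemma two_point {r : ℕ} (hr : 1 ≤ r) (a b : ℝ) :
    (a + b) ^ (2 * r) + (a - b) ^ (2 * r) ≤ 2 * (a ^ 2 + (2 * r - 1) * b ^ 2) ^ r := by
  have h : (a + b) ^ (2 * r) + (a - b) ^ (2 * r) =
      ∑ i ∈ range (2 * r + 1),
        (b ^ i * a ^ (2 * r - i) * (2 * r).choose i) * (1 + (-1) ^ i) := by
    rw [add_comm a b, show a - b = -b + a by ring, add_pow, add_pow, ← sum_add_distrib]
    refine sum_congr rfl fun i _ => ?_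
    rw [neg_pow b]
    ring
  rw [h, sum_even_terms (fun i => b ^ i * a ^ (2 * r - i) * (2 * r).choose i),
    add_comm (a ^ 2), add_pow]
  refine mul_le_mul_of_nonneg_left (sum_le_sum fun j _ => ?_) (by norm_num)
  calc b ^ (2 * j) * a ^ (2 * r - 2 * j) * ((2 * r).choose (2 * j) : ℝ)
      ≤ b ^ (2 * j) * a ^ (2 * r - 2 * j) * ((2 * r - 1) ^ j * r.choose j) := by
        refine mul_le_mul_of_nonneg_left (choose_two_mul_le hr j) ?_
        rw [← Nat.mul_sub, pow_mul, pow_mul]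
        positivity
    _ = _ := by
      rw [← Nat.mul_sub, pow_mul, pow_mul, mul_pow (2 * (r : ℝ) - 1)]
      ring

/-- Minkowski's inequality for averages of natural powers. -/
lemma sum_add_pow_le {ι : Type*} (s : Finset ι) {r : ℕ} (hr : 1 ≤ r) {u v : ι → ℝ}
    (hu : ∀ i, 0 ≤ u i) (hv : ∀ i, 0 ≤ v i) {N U V : ℝ} (hN : 0 ≤ N) (hU : 0 ≤ U) (hV : 0 ≤ V)
    (h₁ : ∑ i ∈ s, u i ^ r ≤ N * U ^ r) (h₂ : ∑ i ∈ s, v i ^ r ≤ N * V ^ r) :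
    ∑ i ∈ s, (u i + v i) ^ r ≤ N * (U + V) ^ r := by
  have hr' : (1 : ℝ) ≤ r := by exact_mod_cast hr
  have hr0 : r ≠ 0 := by omega
  have h := Real.Lp_add_le_of_nonneg s hr' (fun i _ => hu i) (fun i _ => hv i)
  simp only [Real.rpow_natCast] at h
  have root : ∀ {w : ι → ℝ} {W : ℝ}, (∀ i, 0 ≤ w i) → 0 ≤ W → ∑ i ∈ s, w i ^ r ≤ N * W ^ r →
      (∑ i ∈ s, w i ^ r) ^ (1 / (r : ℝ)) ≤ N ^ (1 / (r : ℝ)) * W := by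
    intro w W hw hW hs
    calc _ ≤ (N * W ^ r) ^ (1 / (r : ℝ)) :=
          Real.rpow_le_rpow (sum_nonneg fun i _ => pow_nonneg (hw i) r) hs (by positivity)
      _ = _ := by
        rw [Real.mul_rpow hN (by positivity), one_div, Real.pow_rpow_inv_natCast hW hr0]
  have h' : (∑ i ∈ s, (u i + v i) ^ r) ^ (1 / (r : ℝ)) ≤ N ^ (1 / (r : ℝ)) * (U + V) := by
    linarith [root hu hU h₁, root hv hV h₂]
  have hnn : 0 ≤ ∑ i ∈ s, (u i + v i) ^ r :=
    sum_nonneg fun i _ => pow_nonneg (add_nonneg (hu i) (hv i)) r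
  have := pow_le_pow_left₀ (Real.rpow_nonneg hnn _) h' r
  rwa [mul_pow, one_div, Real.rpow_inv_natCast_pow hnn hr0, Real.rpow_inv_natCast_pow hN hr0]
    at this

/-- Bonami's inequality for even exponents. -/
lemma hypercontractive {r : ℕ} (hr : 1 ≤ r) {n : ℕ} (a : (Fin n → ZMod 2) → ℝ) :
    ∑ x, (∑ v, a v * parity (v ⬝ᵥ x)) ^ (2 * r) ≤
      2 ^ n * (∑ v, (2 * r - 1 : ℝ) ^ weight v * a v ^ 2) ^ r := by
  have hr' : (1 : ℝ) ≤ r := by exact_mod_cast hr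
  have ht : (0 : ℝ) ≤ 2 * r - 1 := by linarith
  induction n with
  | zero => simp [weight, parity, pow_mul]
  | succ n ih =>
    set F : ZMod 2 → (Fin n → ZMod 2) → ℝ :=
      fun b x => ∑ v, a (Fin.cons b v) * parity (v ⬝ᵥ x) with hF
    have h0 : ∀ x : Fin n → ZMod 2,
        ∑ v, a v * parity (v ⬝ᵥ (Fin.cons 0 x : Fin (n + 1) → ZMod 2)) = F 0 x + F 1 x := by
      intro x
      simp [hF, sum_cons, dotProduct_cons, sum_add_distrib]
    have h1 : ∀ x : Fin n → ZMod 2,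
        ∑ v, a v * parity (v ⬝ᵥ (Fin.cons 1 x : Fin (n + 1) → ZMod 2)) = F 0 x - F 1 x := by
      intro x
      simp [hF, sum_cons, dotProduct_cons, sum_add_distrib, parity_add, parity_one,
        sub_eq_add_neg]
    have hS : ∑ v : Fin (n + 1) → ZMod 2, (2 * r - 1 : ℝ) ^ weight v * a v ^ 2 =
        (∑ v : Fin n → ZMod 2, (2 * r - 1 : ℝ) ^ weight v * a (Fin.cons 0 v) ^ 2) +
        (2 * r - 1) * ∑ v : Fin n → ZMod 2, (2 * r - 1 : ℝ) ^ weight v * a (Fin.cons 1 v) ^ 2 := by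
      rw [sum_cons, sum_add_distrib, mul_sum]
      simp only [weight_cons_zero, weight_cons_one, pow_succ]
      congr 1
      exact sum_congr rfl fun v _ => by ring
    have hnn : ∀ b, 0 ≤ ∑ v : Fin n → ZMod 2, (2 * r - 1 : ℝ) ^ weight v * a (Fin.cons b v) ^ 2 :=
      fun b => sum_nonneg fun v _ => by positivity
    have i0 := ih fun v => a (Fin.cons 0 v)
    have i1 := ih fun v => a (Fin.cons 1 v)
    rw [sum_cons, hS]
    simp only [h0, h1]
    calc ∑ x, ((F 0 x + F 1 x) ^ (2 * r) + (F 0 x - F 1 x) ^ (2 * r))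
        ≤ ∑ x, 2 * (F 0 x ^ 2 + (2 * r - 1) * F 1 x ^ 2) ^ r :=
          sum_le_sum fun x _ => two_point hr _ _
      _ = 2 * ∑ x, (F 0 x ^ 2 + (2 * r - 1) * F 1 x ^ 2) ^ r := by rw [mul_sum]
      _ ≤ 2 * (2 ^ n * ((∑ v : Fin n → ZMod 2, (2 * r - 1 : ℝ) ^ weight v * a (Fin.cons 0 v) ^ 2) +
        (2 * r - 1) * ∑ v : Fin n → ZMod 2,
          (2 * r - 1 : ℝ) ^ weight v * a (Fin.cons 1 v) ^ 2) ^ r) := by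
          refine mul_le_mul_of_nonneg_left ?_ (by norm_num)
          refine sum_add_pow_le _ hr (fun x => by positivity) (fun x => by positivity)
            (by positivity) (hnn 0) (mul_nonneg ht (hnn 1)) ?_ ?_
          · simpa only [← pow_mul] using i0
          · simp only [mul_pow, ← mul_sum, ← pow_mul]
            rw [mul_left_comm]
            exact mul_le_mul_of_nonneg_left i1 (by positivity)
      _ = _ := by ring

lemma parseval {n : ℕ} (a : (Fin n → ZMod 2) → ℝ) :
    ∑ x, (∑ v, a v * parity (v ⬝ᵥ x)) ^ 2 = 2 ^ n * ∑ v, a v ^ 2 := by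
  induction n with
  | zero => simp [parity]
  | succ n ih =>
    have i0 := ih fun v => a (Fin.cons 0 v)
    have i1 := ih fun v => a (Fin.cons 1 v)
    rw [sum_cons, sum_cons fun v => a v ^ 2, sum_add_distrib (f := fun v => a (Fin.cons 0 v) ^ 2),
      pow_succ, mul_right_comm, mul_add, ← i0, ← i1, ← sum_add_distrib, sum_mul]
    refine sum_congr rfl fun x _ => ?_
    simp only [sum_cons, dotProduct_cons, sum_add_distrib, parity_add, parity_one,
      mul_zero, mul_one, parity_zero, one_mul, mul_neg, neg_mul, sum_neg_distrib]
    ring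

/-- The Fourier coefficient at `v` of the uniform distribution on `A`. -/
def bias {n : ℕ} (A : Finset (Fin n → ZMod 2)) (v : Fin n → ZMod 2) : ℝ :=
  (∑ x ∈ A, parity (v ⬝ᵥ x)) / A.card

/-- The Fourier weight at level `d` of the uniform distribution on `A`. -/
def levelWeight {n : ℕ} (A : Finset (Fin n → ZMod 2)) (d : ℕ) : ℝ :=
  ∑ v with weight v = d, bias A v ^ 2

lemma levelWeight_nonneg {n : ℕ} (A : Finset (Fin n → ZMod 2)) (d : ℕ) : 0 ≤ levelWeight A d :=
  sum_nonneg fun _ _ => sq_nonneg _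

/-- The level-`d` inequality. -/
lemma levelWeight_pow_le {n : ℕ} {A : Finset (Fin n → ZMod 2)} (hA : A.Nonempty) {r : ℕ}
    (hr : 1 ≤ r) (d : ℕ) :
    levelWeight A d ^ r ≤ 2 ^ n / A.card * ((2 * r - 1 : ℝ) ^ d) ^ r := by
  have hcard : (0 : ℝ) < A.card := by exact_mod_cast hA.card_pos
  have hr' : (1 : ℝ) ≤ r := by exact_mod_cast hr
  have ht : (0 : ℝ) ≤ 2 * r - 1 := by linarith
  set W := levelWeight A d with hW
  have hW0 : 0 ≤ W := levelWeight_nonneg A d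
  set a : (Fin n → ZMod 2) → ℝ := fun v => if weight v = d then bias A v else 0 with ha
  set P : (Fin n → ZMod 2) → ℝ := fun x => ∑ v, a v * parity (v ⬝ᵥ x) with hP
  have hsum : ∑ x ∈ A, P x = A.card * W := by
    simp only [hP]
    rw [sum_comm, hW, levelWeight, sum_filter, mul_sum]
    refine sum_congr rfl fun v _ => ?_
    rw [← mul_sum]
    simp only [ha]
    split_ifs
    · have : ∑ x ∈ A, parity (v ⬝ᵥ x) = A.card * bias A v := by
        rw [bias]; field_simp
      rw [this]; ring
    · simp
  have hnorm : ∑ v, (2 * r - 1 : ℝ) ^ weight v * a v ^ 2 = (2 * r - 1) ^ d * W := by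
    rw [hW, levelWeight, sum_filter, mul_sum]
    refine sum_congr rfl fun v _ => ?_
    simp only [ha]
    split_ifs with h
    · rw [h]
    · simp
  have hyp := hypercontractive hr a
  rw [hnorm] at hyp
  have jensen : W ^ (2 * r) ≤ ∑ x ∈ A, (A.card : ℝ)⁻¹ * P x ^ (2 * r) := by
    have := Real.pow_arith_mean_le_arith_mean_pow_of_even A (fun _ => (A.card : ℝ)⁻¹) P
      (fun _ _ => by positivity) (by simp [hcard.ne']) (even_two_mul r)
    rwa [← mul_sum, hsum, inv_mul_cancel_left₀ hcard.ne'] at this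
  have hle : ∑ x ∈ A, P x ^ (2 * r) ≤ ∑ x, P x ^ (2 * r) :=
    sum_le_sum_of_subset_of_nonneg (subset_univ A) fun x _ _ => by rw [pow_mul]; positivity
  have key : W ^ r * W ^ r ≤ (2 ^ n / A.card * ((2 * r - 1 : ℝ) ^ d) ^ r) * W ^ r := by
    calc W ^ r * W ^ r = W ^ (2 * r) := by rw [two_mul, pow_add]
      _ ≤ (A.card : ℝ)⁻¹ * ∑ x ∈ A, P x ^ (2 * r) := by rwa [← mul_sum] at jensen
      _ ≤ (A.card : ℝ)⁻¹ * (2 ^ n * ((2 * r - 1) ^ d * W) ^ r) := by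
        gcongr
        exact hle.trans hyp
      _ = _ := by rw [mul_pow]; ring
  rcases hW0.eq_or_lt with h | h
  · rw [← h, zero_pow (by omega)]
    positivity
  · exact le_of_mul_le_mul_right key (by positivity)

lemma sum_abs_sub_sq_le {m : ℕ} (p : (Fin m → ZMod 2) → ℝ) (hp : ∑ z, p z = 1) :
    (∑ z, |p z - ((2 : ℝ) ^ m)⁻¹|) ^ 2 ≤
      ∑ s ∈ univ.erase (0 : Fin m → ZMod 2), (∑ z, p z * parity (z ⬝ᵥ s)) ^ 2 := by
  have hcard : ((univ : Finset (Fin m → ZMod 2)).card : ℝ) = 2 ^ m := by simp [ZMod.card]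
  have h1 := sq_sum_le_card_mul_sum_sq (s := (univ : Finset (Fin m → ZMod 2)))
    (f := fun z => |p z - ((2 : ℝ) ^ m)⁻¹|)
  rw [hcard] at h1
  refine h1.trans ?_
  have h2 := parseval p
  rw [← add_sum_erase _ _ (mem_univ (0 : Fin m → ZMod 2))] at h2
  simp only [dotProduct_zero, parity_zero, mul_one, hp] at h2
  have h3 : ∑ z, |p z - ((2 : ℝ) ^ m)⁻¹| ^ 2 = ∑ z, p z ^ 2 - ((2 : ℝ) ^ m)⁻¹ := by
    have : ∀ z, |p z - ((2 : ℝ) ^ m)⁻¹| ^ 2 =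
        p z ^ 2 - 2 * ((2 : ℝ) ^ m)⁻¹ * p z + (((2 : ℝ) ^ m)⁻¹) ^ 2 := fun z => by
      rw [sq_abs]; ring
    simp only [this, sum_add_distrib, sum_sub_distrib, ← mul_sum, hp, sum_const, nsmul_eq_mul,
      hcard]
    field_simp
    ring
  rw [h3, mul_sub, mul_inv_cancel₀ (by positivity)]
  linarith

/-- The distribution of `M x` for `x` uniform on `A`. -/
def imageDist {m n : ℕ} (A : Finset (Fin n → ZMod 2)) (M : Matrix (Fin m) (Fin n) (ZMod 2))
    (z : Fin m → ZMod 2) : ℝ :=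
  ((A.filter fun x => M.mulVec x = z).card : ℝ) / (A.card : ℝ)

lemma sum_imageDist_mul {m n : ℕ} (A : Finset (Fin n → ZMod 2))
    (M : Matrix (Fin m) (Fin n) (ZMod 2)) (g : (Fin m → ZMod 2) → ℝ) :
    ∑ z, imageDist A M z * g z = (∑ x ∈ A, g (M.mulVec x)) / A.card := by
  rw [← sum_fiberwise A M.mulVec, sum_div]
  refine sum_congr rfl fun z _ => ?_
  rw [sum_congr rfl fun x hx => by rw [(mem_filter.1 hx).2], sum_const, nsmul_eq_mul, imageDist]
  ring

lemma sum_imageDist {m n : ℕ} {A : Finset (Fin n → ZMod 2)} (hA : A.Nonempty)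
    (M : Matrix (Fin m) (Fin n) (ZMod 2)) : ∑ z, imageDist A M z = 1 := by
  have h := sum_imageDist_mul A M fun _ => 1
  have : (A.card : ℝ) ≠ 0 := by exact_mod_cast hA.card_pos.ne'
  simpa [this] using h

lemma sum_imageDist_mul_parity {m n : ℕ} (A : Finset (Fin n → ZMod 2))
    (M : Matrix (Fin m) (Fin n) (ZMod 2)) (s : Fin m → ZMod 2) :
    ∑ z, imageDist A M z * parity (z ⬝ᵥ s) = bias A (Matrix.vecMul s M) := by
  rw [sum_imageDist_mul A M fun z => parity (z ⬝ᵥ s), bias]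
  simp only [dotProduct_comm _ s, Matrix.dotProduct_mulVec]

lemma sum_abs_imageDist_sub_sq_le {m n : ℕ} {A : Finset (Fin n → ZMod 2)} (hA : A.Nonempty)
    (M : Matrix (Fin m) (Fin n) (ZMod 2)) :
    (∑ z, |imageDist A M z - ((2 : ℝ) ^ m)⁻¹|) ^ 2 ≤
      ∑ s ∈ univ.erase (0 : Fin m → ZMod 2), bias A (Matrix.vecMul s M) ^ 2 := by
  simpa only [sum_imageDist_mul_parity] using
    sum_abs_sub_sq_le (imageDist A M) (sum_imageDist hA M)

lemma sum_abs_imageDist_sub_le_two {m n : ℕ} {A : Finset (Fin n → ZMod 2)} (hA : A.Nonempty)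
    (M : Matrix (Fin m) (Fin n) (ZMod 2)) :
    ∑ z, |imageDist A M z - ((2 : ℝ) ^ m)⁻¹| ≤ 2 := by
  have hcard : ((univ : Finset (Fin m → ZMod 2)).card : ℝ) = 2 ^ m := by simp [ZMod.card]
  calc ∑ z, |imageDist A M z - ((2 : ℝ) ^ m)⁻¹|
      ≤ ∑ z, (imageDist A M z + ((2 : ℝ) ^ m)⁻¹) := sum_le_sum fun z _ => by
        have h0 : 0 ≤ imageDist A M z := by rw [imageDist]; positivity
        have h1 : (0 : ℝ) ≤ ((2 : ℝ) ^ m)⁻¹ := by positivity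
        rw [abs_le]
        constructor <;> linarith
    _ = 2 := by
      rw [sum_add_distrib, sum_imageDist hA, sum_const, nsmul_eq_mul, hcard,
        mul_inv_cancel₀ (by positivity)]
      norm_num

lemma weight_vecMul {m n : ℕ} {M : Matrix (Fin m) (Fin n) (ZMod 2)} (hM : IsMatchingMatrix M)
    (s : Fin m → ZMod 2) : weight (Matrix.vecMul s M) = 2 * weight s := by
  have huniq : ∀ i ℓ ℓ', M ℓ i ≠ 0 → M ℓ' i ≠ 0 → ℓ = ℓ' := fun i ℓ ℓ' h h' =>
    card_le_one.1 (hM.2 i) ℓ (by simpa using h) ℓ' (by simpa using h')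
  have hsupp : (univ.filter fun i => Matrix.vecMul s M i ≠ 0) =
      (univ.filter fun ℓ => s ℓ ≠ 0).biUnion fun ℓ => univ.filter fun i => M ℓ i ≠ 0 := by
    ext i
    simp only [mem_filter, mem_univ, true_and, mem_biUnion, Matrix.vecMul, dotProduct]
    constructor
    · intro h
      obtain ⟨ℓ, -, hℓ⟩ := exists_ne_zero_of_sum_ne_zero h
      exact ⟨ℓ, left_ne_zero_of_mul hℓ, right_ne_zero_of_mul hℓ⟩
    · rintro ⟨ℓ, hs, hℓ⟩
      rw [sum_eq_single ℓ]
      · exact mul_ne_zero hs hℓ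
      · intro ℓ' _ hne
        by_contra h
        exact hne (huniq i _ _ (right_ne_zero_of_mul h) hℓ)
      · simp
  rw [weight, hsupp, card_biUnion, sum_congr rfl fun ℓ _ => hM.1 ℓ, sum_const, weight,
    smul_eq_mul, mul_comm]
  intro ℓ _ ℓ' _ hne
  rw [Function.onFun, disjoint_left]
  intro i hi hi'
  exact hne (huniq i _ _ (by simpa using hi) (by simpa using hi'))

lemma card_weight_eq (n d : ℕ) :
    ((univ.filter fun v : Fin n → ZMod 2 => weight v = d).card : ℝ) = n.choose d := by
  rw [card_filter, Nat.cast_sum]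
  induction n generalizing d with
  | zero => cases d <;> simp [weight]
  | succ n ih =>
    rw [sum_cons, sum_add_distrib]
    simp only [weight_cons_zero, weight_cons_one]
    cases d with
    | zero => rw [ih]; simp
    | succ d =>
      simp only [Nat.add_right_cancel_iff]
      rw [ih, ih, Nat.choose_succ_succ]
      push_cast
      ring

lemma exists_perm_of_weight_eq {n : ℕ} {v w : Fin n → ZMod 2} (h : weight v = weight w) :
    ∃ σ : Equiv.Perm (Fin n), v = w ∘ σ := by
  have hc : Fintype.card {i // v i ≠ 0} = Fintype.card {i // w i ≠ 0} := by
    rw [Fintype.card_subtype, Fintype.card_subtype]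
    exact h
  let e : {i // v i ≠ 0} ≃ {i // w i ≠ 0} := Fintype.equivOfCardEq hc
  refine ⟨e.extendSubtype, funext fun i => ?_⟩
  by_cases hi : v i = 0
  · have := e.extendSubtype_not_mem i (not_not.2 hi)
    rw [hi, Function.comp_apply, not_not.1 this]
  · have := e.extendSubtype_mem i hi
    rw [(eq_zero_or_one (v i)).resolve_left hi, Function.comp_apply,
      (eq_zero_or_one (w _)).resolve_left this]

lemma IsMatchingMatrix.submatrix {m n : ℕ} {M : Matrix (Fin m) (Fin n) (ZMod 2)}
    (hM : IsMatchingMatrix M) (σ : Equiv.Perm (Fin n)) : IsMatchingMatrix (M.submatrix id σ) := by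
  refine ⟨fun ℓ => ?_, fun i => hM.2 (σ i)⟩
  exact (card_equiv σ fun i => by
    rw [mem_filter, mem_filter]
    simp only [mem_univ, true_and]
    rfl).trans (hM.1 ℓ)

/-- The finite set of matchings with `m` ordered edges on `n` vertices. -/
def matchings (m n : ℕ) : Finset (Matrix (Fin m) (Fin n) (ZMod 2)) :=
  univ.filter fun M => IsMatchingMatrix M

lemma card_fiber_le {m n : ℕ} (s : Fin m → ZMod 2) {v w : Fin n → ZMod 2}
    (h : weight v = weight w) :
    ((matchings m n).filter fun M => Matrix.vecMul s M = w).card ≤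
      ((matchings m n).filter fun M => Matrix.vecMul s M = v).card := by
  obtain ⟨σ, rfl⟩ := exists_perm_of_weight_eq h
  refine card_le_card_of_injOn (fun M => M.submatrix id σ) ?_ ?_
  · intro M hM
    simp only [matchings, coe_filter, mem_filter, mem_univ, true_and, Set.mem_ofPred_eq] at hM ⊢
    refine ⟨hM.1.submatrix σ, ?_⟩
    rw [← hM.2]
    rfl
  · intro M _ M' _ hMM
    ext ℓ i
    simpa using congrFun (congrFun hMM ℓ) (σ.symm i)

/-- For a uniform matching `M`, the vector `s M` is uniform on the vectors of its weight. -/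
lemma choose_mul_sum_matchings {m n : ℕ} (s : Fin m → ZMod 2) (g : (Fin n → ZMod 2) → ℝ) :
    (n.choose (2 * weight s) : ℝ) * ∑ M ∈ matchings m n, g (Matrix.vecMul s M) =
      (matchings m n).card * ∑ v with weight v = 2 * weight s, g v := by
  have hmaps : ∀ M ∈ matchings m n,
      Matrix.vecMul s M ∈ univ.filter fun v : Fin n → ZMod 2 => weight v = 2 * weight s := by
    intro M hM
    simpa using weight_vecMul (mem_filter.1 hM).2 s
  rw [← sum_fiberwise_of_maps_to hmaps, mul_sum, mul_sum]
  refine sum_congr rfl fun v hv => ?_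
  rw [sum_congr rfl fun M hM => by rw [(mem_filter.1 hM).2], sum_const, nsmul_eq_mul, ← mul_assoc]
  congr 1
  rw [← card_weight_eq, card_eq_sum_card_fiberwise hmaps]
  norm_cast
  rw [← smul_eq_mul, ← sum_const]
  refine sum_congr rfl fun w hw => ?_
  have hvw : weight v = weight w := by rw [(mem_filter.1 hv).2, (mem_filter.1 hw).2]
  exact le_antisymm (card_fiber_le s hvw.symm) (card_fiber_le s hvw)

lemma weight_le {m : ℕ} (s : Fin m → ZMod 2) : weight s ≤ m := by
  simpa [weight] using card_le_univ (univ.filter fun i => s i ≠ 0)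

lemma weight_pos {m : ℕ} {s : Fin m → ZMod 2} (hs : s ≠ 0) : 1 ≤ weight s := by
  obtain ⟨i, hi⟩ := Function.ne_iff.1 hs
  exact card_pos.2 ⟨i, by simpa using hi⟩

lemma sum_erase_zero_weight {m : ℕ} (h : ℕ → ℝ) :
    ∑ s ∈ univ.erase (0 : Fin m → ZMod 2), h (weight s) =
      ∑ k ∈ Icc 1 m, (m.choose k : ℝ) * h k := by
  have hmaps : ∀ s ∈ univ.erase (0 : Fin m → ZMod 2), weight s ∈ Icc 1 m := fun s hs =>
    mem_Icc.2 ⟨weight_pos (ne_of_mem_erase hs), weight_le s⟩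
  rw [← sum_fiberwise_of_maps_to hmaps]
  refine sum_congr rfl fun k hk => ?_
  rw [sum_congr rfl fun s hs => by rw [(mem_filter.1 hs).2], sum_const, nsmul_eq_mul,
    ← card_weight_eq]
  congr 3
  ext s
  simp only [mem_filter, mem_erase, mem_univ, and_true, true_and, and_iff_right_iff_imp]
  rintro hs rfl
  simp [weight] at hs
  have := (mem_Icc.1 hk).1
  omega

/-- The probability that a fixed vector of weight `2 k` is the sum of `k` edges of a uniform
matching with `m` edges on `n` vertices. -/
def matchingRatio (m n k : ℕ) : ℝ := (m.choose k : ℝ) / (n.choose (2 * k) : ℝ)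

lemma sq_expectation_le {m n : ℕ} {A : Finset (Fin n → ZMod 2)} (hA : A.Nonempty)
    (hmn : 4 * m ≤ n) :
    (((matchings m n).card : ℝ)⁻¹ *
      ∑ M ∈ matchings m n, ∑ z, |imageDist A M z - ((2 : ℝ) ^ m)⁻¹|) ^ 2 ≤
      ∑ k ∈ Icc 1 m, matchingRatio m n k * levelWeight A (2 * k) := by
  have hnonneg : 0 ≤ ∑ k ∈ Icc 1 m, matchingRatio m n k * levelWeight A (2 * k) :=
    sum_nonneg fun k _ => mul_nonneg (by rw [matchingRatio]; positivity) (levelWeight_nonneg A _)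
  rcases (matchings m n).eq_empty_or_nonempty with hN | hN
  · simpa [hN] using hnonneg
  have hcard : (0 : ℝ) < (matchings m n).card := by exact_mod_cast hN.card_pos
  set N : ℝ := ((matchings m n).card : ℝ) with hNdef
  have hfiber : ∀ s : Fin m → ZMod 2,
      N⁻¹ * ∑ M ∈ matchings m n, bias A (Matrix.vecMul s M) ^ 2 =
        levelWeight A (2 * weight s) / (n.choose (2 * weight s) : ℝ) := by
    intro s
    have h := choose_mul_sum_matchings (n := n) s fun v => bias A v ^ 2
    have hs := weight_le s
    have hc : (0 : ℝ) < n.choose (2 * weight s) := by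
      exact_mod_cast Nat.choose_pos (by omega)
    rw [levelWeight, eq_div_iff hc.ne', mul_comm, ← mul_assoc, mul_right_comm, h, ← hNdef,
      mul_right_comm, mul_inv_cancel₀ hcard.ne', one_mul]
  calc _ = N⁻¹ ^ 2 * (∑ M ∈ matchings m n, ∑ z, |imageDist A M z - ((2 : ℝ) ^ m)⁻¹|) ^ 2 :=
        mul_pow _ _ _
    _ ≤ N⁻¹ ^ 2 * (N * ∑ M ∈ matchings m n,
          (∑ z, |imageDist A M z - ((2 : ℝ) ^ m)⁻¹|) ^ 2) := by
        gcongr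
        exact sq_sum_le_card_mul_sum_sq
    _ = N⁻¹ * ∑ M ∈ matchings m n, (∑ z, |imageDist A M z - ((2 : ℝ) ^ m)⁻¹|) ^ 2 := by
        rw [sq, ← mul_assoc, mul_assoc N⁻¹, inv_mul_cancel₀ hcard.ne', mul_one]
    _ ≤ N⁻¹ * ∑ M ∈ matchings m n,
          ∑ s ∈ univ.erase (0 : Fin m → ZMod 2), bias A (Matrix.vecMul s M) ^ 2 := by
        gcongr
        exact sum_abs_imageDist_sub_sq_le hA _
    _ = ∑ s ∈ univ.erase (0 : Fin m → ZMod 2),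
          levelWeight A (2 * weight s) / (n.choose (2 * weight s) : ℝ) := by
        rw [sum_comm, mul_sum]
        exact sum_congr rfl fun s _ => hfiber s
    _ = _ := by
        rw [sum_erase_zero_weight fun k => levelWeight A (2 * k) / (n.choose (2 * k) : ℝ)]
        refine sum_congr rfl fun k _ => ?_
        rw [matchingRatio]
        ring

lemma matchingRatio_nonneg (m n k : ℕ) : 0 ≤ matchingRatio m n k := by
  rw [matchingRatio]
  positivity

lemma matchingRatio_succ {m n k : ℕ} (hmn : 4 * m ≤ n) (hk : k < m) :
    matchingRatio m n (k + 1) =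
      matchingRatio m n k * (2 * (2 * k + 1) * (m - k) / ((n - 2 * k) * (n - 2 * k - 1))) := by
  have h1 := Nat.choose_succ_right_eq n (2 * k)
  have h2 := Nat.choose_succ_right_eq n (2 * k + 1)
  have h3 := Nat.choose_succ_right_eq m k
  have e1 : (((n - 2 * k : ℕ)) : ℝ) = n - 2 * k := by
    rw [Nat.cast_sub (by omega)]; push_cast; ring
  have e2 : (((n - (2 * k + 1) : ℕ)) : ℝ) = n - 2 * k - 1 := by
    rw [Nat.cast_sub (by omega)]; push_cast; ring
  have e3 : (((m - k : ℕ)) : ℝ) = m - k := Nat.cast_sub hk.le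
  have g1 : (n.choose (2 * k + 1) : ℝ) * (2 * k + 1) = n.choose (2 * k) * (n - 2 * k) := by
    rw [← e1]; exact_mod_cast h1
  have g2 : (n.choose (2 * (k + 1)) : ℝ) * (2 * k + 2) =
      n.choose (2 * k + 1) * (n - 2 * k - 1) := by
    rw [← e2]; exact_mod_cast h2
  have g3 : (m.choose (k + 1) : ℝ) * (k + 1) = m.choose k * (m - k) := by
    rw [← e3]; exact_mod_cast h3
  have p1 : (0 : ℝ) < n - 2 * k := by rw [← e1]; exact_mod_cast (by omega)
  have p2 : (0 : ℝ) < n - 2 * k - 1 := by rw [← e2]; exact_mod_cast (by omega)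
  have c1 : (0 : ℝ) < n.choose (2 * k) := by exact_mod_cast Nat.choose_pos (by omega)
  have c2 : (0 : ℝ) < n.choose (2 * (k + 1)) := by exact_mod_cast Nat.choose_pos (by omega)
  have hk1 : (0 : ℝ) < (k : ℝ) + 1 := by positivity
  have g4 : (n.choose (2 * (k + 1)) : ℝ) * ((2 * k + 1) * (2 * k + 2)) =
      n.choose (2 * k) * ((n - 2 * k) * (n - 2 * k - 1)) := by
    linear_combination (2 * k + 1 : ℝ) * g2 + (n - 2 * k - 1 : ℝ) * g1
  rw [matchingRatio, matchingRatio, div_mul_div_comm, div_eq_div_iff c2.ne' (by positivity)]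
  refine mul_right_cancel₀ hk1.ne' ?_
  linear_combination (n.choose (2 * k) * ((n - 2 * k) * (n - 2 * k - 1)) : ℝ) * g3 -
    ((m.choose k : ℝ) * (m - k)) * g4

lemma matchingRatio_succ_le_half {m n k : ℕ} (hmn : 4 * m ≤ n) (hk : k < m) :
    matchingRatio m n (k + 1) ≤ matchingRatio m n k * (1 / 2) := by
  rw [matchingRatio_succ hmn hk]
  refine mul_le_mul_of_nonneg_left ?_ (matchingRatio_nonneg m n k)
  have h1 : (4 : ℝ) * m ≤ n := by exact_mod_cast hmn
  have h2 : (k : ℝ) + 1 ≤ m := by exact_mod_cast hk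
  have h3 : (0 : ℝ) ≤ k := k.cast_nonneg
  rw [div_le_div_iff₀ (mul_pos (by linarith) (by linarith)) (by norm_num)]
  have h4 : (2 * k + 1 : ℝ) ≤ n - 2 * k - 1 := by linarith
  have h5 : 4 * ((m : ℝ) - k) ≤ n - 2 * k := by linarith
  have := mul_le_mul h4 h5 (by linarith) (by linarith)
  linarith

lemma matchingRatio_succ_le {m n k : ℕ} (hmn : 4 * m ≤ n) (hk : k < m) :
    matchingRatio m n (k + 1) ≤ matchingRatio m n k * (16 * (k + 1) * m / n ^ 2) := by
  rw [matchingRatio_succ hmn hk]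
  refine mul_le_mul_of_nonneg_left ?_ (matchingRatio_nonneg m n k)
  have h1 : (4 : ℝ) * m ≤ n := by exact_mod_cast hmn
  have h2 : (k : ℝ) + 1 ≤ m := by exact_mod_cast hk
  have h3 : (0 : ℝ) ≤ k := k.cast_nonneg
  have hn : (0 : ℝ) < n := by linarith
  have h4 : (n : ℝ) ^ 2 / 4 ≤ (n - 2 * k) * (n - 2 * k - 1) := by
    have := mul_le_mul (show (n : ℝ) / 2 ≤ n - 2 * k by linarith)
      (show (n : ℝ) / 2 ≤ n - 2 * k - 1 by linarith) (by linarith) (by linarith)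
    linarith
  calc 2 * (2 * k + 1) * (m - k) / ((n - 2 * k) * (n - 2 * k - 1) : ℝ)
      ≤ 2 * (2 * (k + 1)) * m / (n ^ 2 / 4 : ℝ) := by
        have h5 : (2 * k + 1 : ℝ) ≤ 2 * (k + 1) := by linarith
        have h6 : (m : ℝ) - k ≤ m := by linarith
        have h7 : (0 : ℝ) ≤ m - k := by linarith
        exact div_le_div₀ (by positivity) (by gcongr) (by positivity) h4
    _ = _ := by ring

lemma matchingRatio_le_pow {m n : ℕ} (hmn : 4 * m ≤ n) {k K : ℕ} (hkK : k ≤ K) (hk : k ≤ m) :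
    matchingRatio m n k ≤ (16 * K * m / n ^ 2 : ℝ) ^ k := by
  induction k with
  | zero => simp [matchingRatio]
  | succ k ih =>
    have hK : (k : ℝ) + 1 ≤ K := by exact_mod_cast hkK
    calc _ ≤ matchingRatio m n k * (16 * (k + 1) * m / n ^ 2) := matchingRatio_succ_le hmn hk
      _ ≤ (16 * K * m / n ^ 2 : ℝ) ^ k * (16 * K * m / n ^ 2) := by
        gcongr
        exact ih (by omega) (by omega)
      _ = _ := (pow_succ _ _).symm

lemma matchingRatio_le_mul_half_pow {m n : ℕ} (hmn : 4 * m ≤ n) {k K : ℕ} (hKk : K ≤ k)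
    (hk : k ≤ m) : matchingRatio m n k ≤ matchingRatio m n K * (1 / 2) ^ (k - K) := by
  induction k, hKk using Nat.le_induction with
  | base => simp
  | succ k hKk ih =>
    calc _ ≤ matchingRatio m n k * (1 / 2) := matchingRatio_succ_le_half hmn hk
      _ ≤ (matchingRatio m n K * (1 / 2) ^ (k - K)) * (1 / 2) := by
        gcongr
        exact ih (by omega)
      _ = _ := by rw [Nat.succ_sub hKk, pow_succ, mul_assoc]

lemma sum_half_pow_le_two (S : Finset ℕ) (K : ℕ) (hS : ∀ k ∈ S, K ≤ k) :
    ∑ k ∈ S, (1 / 2 : ℝ) ^ (k - K) ≤ 2 := by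
  have hinj : Set.InjOn (fun k => k - K) (S : Set ℕ) := by
    intro a ha b hb hab
    have h1 := hS a ha
    have h2 := hS b hb
    simp only at hab
    omega
  rw [← sum_image (f := fun j => (1 / 2 : ℝ) ^ j) hinj]
  exact (summable_geometric_two.sum_le_tsum _ fun _ _ => by positivity).trans_eq
    tsum_geometric_two

section LevelSum

variable {m n : ℕ} {c : ℝ} {W : ℕ → ℝ}

lemma low_level_term_le (hmn : 4 * m ≤ n) (hc : 1 ≤ c) (hW0 : ∀ k, 0 ≤ W k)
    (hW : ∀ k r : ℕ, 1 ≤ r → W k ^ r ≤ (2 : ℝ) ^ c * ((2 * r - 1 : ℝ) ^ (2 * k)) ^ r)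
    (hx : 512 * c ^ 2 * m / n ^ 2 ≤ 1 / 2) {k : ℕ} (hk1 : 1 ≤ k) (hkm : k ≤ m) (hkc : (k : ℝ) ≤ c) :
    matchingRatio m n k * W k ≤ 512 * c ^ 2 * m / n ^ 2 * (1 / 2) ^ (k - 1) := by
  have hk : (1 : ℝ) ≤ k := by exact_mod_cast hk1
  have hn : (0 : ℝ) < n := by exact_mod_cast (by omega : 0 < n)
  have hck : 1 ≤ c / k := by rwa [one_le_div (by linarith)]
  set r := ⌈c / k⌉₊ with hr
  have hr1 : 1 ≤ r := Nat.one_le_ceil_iff.2 (by linarith)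
  have hr1' : (1 : ℝ) ≤ r := by exact_mod_cast hr1
  have hrle : (r : ℝ) ≤ 2 * (c / k) := by
    have := Nat.ceil_lt_add_one (show 0 ≤ c / k by linarith)
    linarith
  have hcr : c ≤ ((k * r : ℕ) : ℝ) := by
    have := Nat.le_ceil (c / k)
    rw [div_le_iff₀ (by linarith)] at this
    push_cast
    linarith
  have h2c : (2 : ℝ) ^ c ≤ (2 ^ k) ^ r := by
    rw [← pow_mul, ← Real.rpow_natCast]
    exact Real.rpow_le_rpow_of_exponent_le (by norm_num) hcr
  have hWk : W k ≤ 2 ^ k * (2 * r - 1 : ℝ) ^ (2 * k) := by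
    have ht : (0 : ℝ) ≤ 2 * r - 1 := by linarith
    refine le_of_pow_le_pow_left₀ (n := r) (by omega) (by positivity) ((hW k r hr1).trans ?_)
    rw [mul_pow]
    gcongr
  have hWk' : W k ≤ (32 * c ^ 2 / k ^ 2) ^ k := by
    calc W k ≤ 2 ^ k * (2 * (2 * (c / k))) ^ (2 * k) := by
          refine hWk.trans ?_
          have ht : (0 : ℝ) ≤ 2 * r - 1 := by linarith
          gcongr
          linarith
      _ = _ := by
        rw [pow_mul, ← mul_pow]
        congr 1
        field_simp
        norm_num
  have hx0 : 0 ≤ 512 * c ^ 2 * m / n ^ 2 := by positivity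
  calc matchingRatio m n k * W k
      ≤ (16 * k * m / n ^ 2 : ℝ) ^ k * (32 * c ^ 2 / k ^ 2) ^ k :=
        mul_le_mul (matchingRatio_le_pow hmn le_rfl hkm) hWk' (hW0 k) (by positivity)
    _ = (512 * c ^ 2 * m / n ^ 2 * (1 / k)) ^ k := by
        rw [← mul_pow]
        congr 1
        field_simp
        ring
    _ ≤ (512 * c ^ 2 * m / n ^ 2) ^ k := by
        gcongr
        refine mul_le_of_le_one_right hx0 ?_
        rwa [div_le_one (by linarith)]
    _ = 512 * c ^ 2 * m / n ^ 2 * (512 * c ^ 2 * m / n ^ 2) ^ (k - 1) := by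
        rw [← pow_succ', Nat.sub_add_cancel hk1]
    _ ≤ _ := by gcongr

lemma high_level_term_le (hmn : 4 * m ≤ n) (hc : 1 ≤ c) (hW0 : ∀ k, 0 ≤ W k)
    (hW : ∀ k r : ℕ, 1 ≤ r → W k ^ r ≤ (2 : ℝ) ^ c * ((2 * r - 1 : ℝ) ^ (2 * k)) ^ r)
    (hx : 512 * c ^ 2 * m / n ^ 2 ≤ 1 / 2) {k : ℕ} (hkm : k ≤ m) (hkc : ⌈c⌉₊ ≤ k) :
    matchingRatio m n k * W k ≤ 512 * c ^ 2 * m / n ^ 2 * (1 / 2) ^ (k - ⌈c⌉₊) := by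
  set K := ⌈c⌉₊ with hK
  have hcK : c ≤ K := Nat.le_ceil c
  have hK1 : 1 ≤ K := Nat.one_le_ceil_iff.2 (by linarith)
  have hKle : (K : ℝ) ≤ 2 * c := by
    have := Nat.ceil_lt_add_one (show 0 ≤ c by linarith)
    linarith
  have hn : (0 : ℝ) < n := by exact_mod_cast (by omega : 0 < n)
  have hWk : W k ≤ 2 ^ K := by
    have h := hW k 1 le_rfl
    norm_num at h
    refine h.trans ?_
    rw [← Real.rpow_natCast]
    exact Real.rpow_le_rpow_of_exponent_le (by norm_num) hcK
  have hx0 : 0 ≤ 512 * c ^ 2 * m / n ^ 2 := by positivity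
  calc matchingRatio m n k * W k
      ≤ ((16 * K * m / n ^ 2 : ℝ) ^ K * (1 / 2) ^ (k - K)) * 2 ^ K := by
        refine mul_le_mul ((matchingRatio_le_mul_half_pow hmn hkc hkm).trans ?_) hWk (hW0 k)
          (by positivity)
        gcongr
        exact matchingRatio_le_pow hmn le_rfl (by omega)
    _ = (32 * K * m / n ^ 2 : ℝ) ^ K * (1 / 2) ^ (k - K) := by
        rw [mul_right_comm, ← mul_pow]
        congr 2
        ring
    _ ≤ (512 * c ^ 2 * m / n ^ 2) ^ K * (1 / 2) ^ (k - K) := by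
        have : 32 * (K : ℝ) ≤ 512 * c ^ 2 := by nlinarith
        gcongr ?_ ^ K * _
        gcongr
    _ ≤ _ := by
        gcongr
        exact pow_le_of_le_one hx0 (by linarith) (by omega)

lemma sum_matchingRatio_mul_le (hmn : 4 * m ≤ n) (hc : 1 ≤ c) (hW0 : ∀ k, 0 ≤ W k)
    (hW : ∀ k r : ℕ, 1 ≤ r → W k ^ r ≤ (2 : ℝ) ^ c * ((2 * r - 1 : ℝ) ^ (2 * k)) ^ r)
    (hx : 512 * c ^ 2 * m / n ^ 2 ≤ 1 / 2) :
    ∑ k ∈ Icc 1 m, matchingRatio m n k * W k ≤ 4 * (512 * c ^ 2 * m / n ^ 2) := by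
  have hx0 : 0 ≤ 512 * c ^ 2 * m / n ^ 2 := by positivity
  rw [← sum_filter_add_sum_filter_not (Icc 1 m) fun k : ℕ => (k : ℝ) ≤ c]
  have low : ∑ k ∈ (Icc 1 m).filter (fun k : ℕ => (k : ℝ) ≤ c), matchingRatio m n k * W k ≤
      512 * c ^ 2 * m / n ^ 2 * 2 := by
    calc _ ≤ ∑ k ∈ (Icc 1 m).filter (fun k : ℕ => (k : ℝ) ≤ c), 512 * c ^ 2 * m / n ^ 2 * (1 / 2) ^ (k - 1) := by
          refine sum_le_sum fun k hk => ?_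
          rw [mem_filter, mem_Icc] at hk
          exact low_level_term_le hmn hc hW0 hW hx hk.1.1 hk.1.2 hk.2
      _ ≤ _ := by
        rw [← mul_sum]
        gcongr
        refine sum_half_pow_le_two _ _ fun k hk => ?_
        rw [mem_filter, mem_Icc] at hk
        exact hk.1.1
  have high : ∑ k ∈ (Icc 1 m).filter (fun k : ℕ => ¬ (k : ℝ) ≤ c), matchingRatio m n k * W k ≤
      512 * c ^ 2 * m / n ^ 2 * 2 := by
    have hceil : ∀ k ∈ (Icc 1 m).filter (fun k : ℕ => ¬ (k : ℝ) ≤ c), k ≤ m ∧ ⌈c⌉₊ ≤ k := by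
      intro k hk
      rw [mem_filter, mem_Icc, not_le] at hk
      exact ⟨hk.1.2, Nat.ceil_le.2 hk.2.le⟩
    calc _ ≤ ∑ k ∈ (Icc 1 m).filter (fun k : ℕ => ¬ (k : ℝ) ≤ c),
            512 * c ^ 2 * m / n ^ 2 * (1 / 2) ^ (k - ⌈c⌉₊) :=
          sum_le_sum fun k hk =>
            high_level_term_le hmn hc hW0 hW hx (hceil k hk).1 (hceil k hk).2
      _ ≤ _ := by
        rw [← mul_sum]
        gcongr
        exact sum_half_pow_le_two _ _ fun k hk => (hceil k hk).2
  linarith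

end LevelSum

end

/-- Main theorem: there is a universal constant `γ > 0` such that whenever `X` is uniform
over `A ⊆ {0,1}^n` with `|A| ≥ 2^{n-c}`, `c ≥ 1`, `α = m/n ∈ (0,1/4]`, and
`c ≤ γ·ε·√(n/α)`, the expected total variation distance between `p_M` and uniform,
over a uniform α-matching `M`, is at most `ε`. -/
theorem main_separation :
    ∃ γ : ℝ, 0 < γ ∧
      ∀ (n m : ℕ) (c ε : ℝ) (A : Finset (Fin n → ZMod 2)),
        0 < m → 4 * m ≤ n →
        1 ≤ c → (2 : ℝ) ^ ((n : ℝ) - c) ≤ (A.card : ℝ) →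
        0 < ε → c ≤ γ * ε * Real.sqrt ((n : ℝ) / ((m : ℝ) / (n : ℝ))) →
        (((Finset.univ.filter (fun M : Matrix (Fin m) (Fin n) (ZMod 2) =>
              IsMatchingMatrix M)).card : ℝ))⁻¹ *
          ∑ M ∈ Finset.univ.filter (fun M : Matrix (Fin m) (Fin n) (ZMod 2) =>
              IsMatchingMatrix M),
            ∑ z : Fin m → ZMod 2,
              |((A.filter fun x => M.mulVec x = z).card : ℝ) / (A.card : ℝ)
                - ((2 : ℝ) ^ m)⁻¹|
        ≤ ε := by
  refine ⟨1 / 64, by norm_num, fun n m c ε A hm hmn hc hA hε hcε => ?_⟩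
  change ((matchings m n).card : ℝ)⁻¹ *
    ∑ M ∈ matchings m n, ∑ z, |imageDist A M z - ((2 : ℝ) ^ m)⁻¹| ≤ ε
  have hm' : (0 : ℝ) < m := by exact_mod_cast hm
  have hn' : (0 : ℝ) < n := by exact_mod_cast (by omega : 0 < n)
  have hcard : (0 : ℝ) < A.card := (Real.rpow_pos_of_pos (by norm_num) _).trans_le hA
  have hne : A.Nonempty := card_pos.1 (by exact_mod_cast hcard)
  rcases le_total 2 ε with h2 | h2
  · refine le_trans ?_ h2
    rw [inv_mul_eq_div]
    refine div_le_of_le_mul₀ (by positivity) (by norm_num) ?_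
    refine (sum_le_card_nsmul _ _ 2 fun M _ => sum_abs_imageDist_sub_le_two hne M).trans_eq ?_
    rw [nsmul_eq_mul, mul_comm]
  have hcsq : c ^ 2 * m / n ^ 2 ≤ ε ^ 2 / 4096 := by
    have h := pow_le_pow_left₀ (by linarith) hcε 2
    rw [mul_pow, Real.sq_sqrt (by positivity)] at h
    rw [div_le_iff₀ (by positivity), ← le_div_iff₀ hm']
    refine h.trans_eq ?_
    field_simp
    norm_num
  have hx : 512 * c ^ 2 * m / n ^ 2 = 512 * (c ^ 2 * m / n ^ 2) := by ring
  have hdensity : (2 : ℝ) ^ n / A.card ≤ 2 ^ c := by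
    rw [Real.rpow_sub (by norm_num), Real.rpow_natCast,
      div_le_iff₀ (Real.rpow_pos_of_pos (by norm_num) _)] at hA
    rwa [div_le_iff₀ hcard, mul_comm]
  have hlevel : ∀ k r : ℕ, 1 ≤ r →
      levelWeight A (2 * k) ^ r ≤ (2 : ℝ) ^ c * ((2 * r - 1 : ℝ) ^ (2 * k)) ^ r := by
    intro k r hr
    have hr' : (1 : ℝ) ≤ r := by exact_mod_cast hr
    have ht : (0 : ℝ) ≤ 2 * r - 1 := by linarith
    refine (levelWeight_pow_le hne hr (2 * k)).trans ?_
    gcongr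
  have hsum := sum_matchingRatio_mul_le (W := fun k => levelWeight A (2 * k)) hmn hc
    (fun k => levelWeight_nonneg A _) hlevel (by rw [hx]; nlinarith)
  refine le_of_pow_le_pow_left₀ two_ne_zero hε.le ((sq_expectation_le hne hmn).trans (hsum.trans ?_))
  rw [hx]
  nlinarith [sq_nonneg ε]
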